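/- For every η ∈ S_{L,M}, the decomposition map β_L(η) = (c(η), d(η)) lands in the product of the background space and the soliton space: c(η) ∈ S^{(b)}_{L,M} and d(η) ∈ S^{(f)}_L. -/

import Mathlib

namespace BBS

attribute [local instance] Classical.propDecidable

noncomputable section

/-- Carrier sequence with initial load `m` for box capacity `L`. -/
def carrierM (L m : ℤ) (η : ℕ → ℤ) : ℕ → ℤ
  | 0 => m
  | j + 1 => η j + max 0 (η j + carrierM L m η j - L)

/-- Carrier sequence (initial load `0`). -/
def carrier (L : ℤ) (η : ℕ → ℤ) : ℕ → ℤ := carrierM L 0 η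

/-- Time evolution `T_L`. -/
def evol (L : ℤ) (η : ℕ → ℤ) (j : ℕ) : ℤ := min (L - η j) (carrier L η j)

/-- Time evolution `T_1^m` on binary sequences. -/
def evolOne (m : ℤ) (w : ℕ → ℤ) (j : ℕ) : ℤ := min (1 - w j) (carrierM 1 m w j)

/-- Membership in `S_{L,M}`. -/
def mem_S (L M : ℤ) (η : ℕ → ℤ) : Prop :=
  (∃ N : ℕ, ∀ j, N ≤ j → η j = 0) ∧
  (∀ j, -M ≤ η j ∧ η j ≤ L + M) ∧
  η 0 ≤ 0 ∧
  (∀ j, max (-η j) (η j - L) ≤ M) ∧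
  (∃ j, max (-η j) (η j - L) = M) ∧
  (∀ i : ℕ, ∑ j ∈ Finset.range (i + 2), η j ≤ ∑ j ∈ Finset.range (i + 1), (L - η j))

/-- Auxiliary sequence for the backward carrier. -/
def backAux (L : ℤ) (η : ℕ → ℤ) (x : ℕ) : ℕ → ℤ
  | 0 => 0
  | n + 1 => η (x - n - 1) + max 0 (η (x - n - 1) + backAux L η x n - L)

/-- Backward carrier `ū` computed from the index `x`. -/
def backCarrier (L : ℤ) (η : ℕ → ℤ) (x j : ℕ) : ℤ :=
  if x ≤ j then 0 else backAux L η x (x - j)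

/-- Reverse time evolution `R_L` computed from the index `x`. -/
def revol (L : ℤ) (η : ℕ → ℤ) (x j : ℕ) : ℤ :=
  if j < x then min (L - η j) (backCarrier L η x (j + 1)) else 0

/-- The concatenated word sequence `r_K(η)`. -/
def rSeq (L M : ℕ) (K : Set ℕ) (η : ℕ → ℤ) (n : ℕ) : ℤ :=
  if (n / (L + 2 * M) ∈ K ∧ ((n % (L + 2 * M) : ℕ) : ℤ) < η (n / (L + 2 * M)) + M) ∨
      (n / (L + 2 * M) ∉ K ∧
        (L : ℤ) + 2 * M - (η (n / (L + 2 * M)) + M) ≤ ((n % (L + 2 * M) : ℕ) : ℤ))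
  then 1 else 0

/-- The concatenated word sequence `l_K(η)`. -/
def lSeq (L M : ℕ) (K : Set ℕ) (η : ℕ → ℤ) (n : ℕ) : ℤ :=
  if (n / (L + 2 * M) ∈ K ∧
        (L : ℤ) + 2 * M - (η (n / (L + 2 * M)) + M) ≤ ((n % (L + 2 * M) : ℕ) : ℤ)) ∨
      (n / (L + 2 * M) ∉ K ∧ ((n % (L + 2 * M) : ℕ) : ℤ) < η (n / (L + 2 * M)) + M)
  then 1 else 0

/-- Soliton flag sequence `a(η)`. -/
def flag (L : ℤ) (η : ℕ → ℤ) : ℕ → ℤ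
  | 0 => 0
  | j + 1 =>
    if η j + η (j + 1) < L then 0
    else if η j + η (j + 1) = L then flag L η j else 1

/-- Primed soliton flag sequence `a′(η)` (with the convention `a′_{-1} = 0`). -/
def flag' (L : ℤ) (η : ℕ → ℤ) : ℕ → ℤ
  | 0 => if η 0 + η 1 < L then 0 else if η 0 + η 1 = L then 0 else 1
  | j + 1 =>
    if η (j + 1) + η (j + 2) < L then 0
    else if η (j + 1) + η (j + 2) = L then flag' L η j else 1

/-- `I(η)`: right ends of contiguous 1-segments. -/
def Iset (L : ℤ) (η : ℕ → ℤ) : Set ℕ := {j | flag L η j = 1 ∧ flag L η (j + 1) = 0}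

/-- `I′(η)`: left ends of contiguous right-1-segments. -/
def Iset' (L : ℤ) (η : ℕ → ℤ) : Set ℕ :=
  {j | (∀ k, j = k + 1 → flag' L η k = 0) ∧ flag' L η j = 1}

def marked (L : ℤ) (η : ℕ → ℤ) (j : ℕ) : Prop := j ∈ Iset L η ∨ j + 1 ∈ Iset L η

def marked' (L : ℤ) (η : ℕ → ℤ) (j : ℕ) : Prop :=
  j ∈ Iset' L η ∨ ∃ k, j = k + 1 ∧ k ∈ Iset' L η

/-- Arc-count sequence `b̃(η)`. -/
def btilde (L M : ℕ) (η : ℕ → ℤ) (j : ℕ) : ℤ :=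
  if marked (L : ℤ) η j then 0
  else min (η j + M) ((L : ℤ) + 2 * M - (η (j + 1) + M))

/-- `b̃_{j-1}` with the convention `b̃_{-1} = 0`. -/
def bprev (L M : ℕ) (η : ℕ → ℤ) : ℕ → ℤ
  | 0 => 0
  | j + 1 => btilde L M η j

/-- Primed arc-count sequence `b̃′(η)`. -/
def btilde' (L M : ℕ) (η : ℕ → ℤ) : ℕ → ℤ
  | 0 => if marked' (L : ℤ) η 0 then 0 else η 0 + M
  | j + 1 =>
    if marked' (L : ℤ) η (j + 1) then 0
    else min (η (j + 1) + M) ((L : ℤ) + 2 * M - (η j + M))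

/-- Background sequence `c(η)`: subsequence of `b̃` on unmarked indices, lowered by `M`. -/
def bg (L M : ℕ) (η : ℕ → ℤ) (j : ℕ) : ℤ :=
  btilde L M η (Nat.nth (fun i => ¬ marked (L : ℤ) η i) j) - M

/-- Primed background sequence `c′(η)`. -/
def bg' (L M : ℕ) (η : ℕ → ℤ) (j : ℕ) : ℤ :=
  btilde' L M η (Nat.nth (fun i => ¬ marked' (L : ℤ) η i) j) - M

/-- Length of the word corresponding to box `j` in `d̃(η)`. -/
def wordLen (L M : ℕ) (η : ℕ → ℤ) (j : ℕ) : ℕ :=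
  if j ∈ Iset (L : ℤ) η then L + 2 * M
  else ((L : ℤ) + 2 * M - bprev L M η j - btilde L M η j).toNat

def wordStart (L M : ℕ) (η : ℕ → ℤ) (j : ℕ) : ℕ :=
  ∑ k ∈ Finset.range j, wordLen L M η k

/-- Raised soliton word sequence `d̃(η)`. -/
def dTilde (L M : ℕ) (η : ℕ → ℤ) (n : ℕ) : ℤ :=
  if ∃ j, wordStart L M η j ≤ n ∧ n < wordStart L M η (j + 1) ∧
      ((j ∈ Iset (L : ℤ) η ∧ ((n - wordStart L M η j : ℕ) : ℤ) < η j + M) ∨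
        (j ∉ Iset (L : ℤ) η ∧
          (L : ℤ) + 2 * M - (η j + M) - bprev L M η j ≤ ((n - wordStart L M η j : ℕ) : ℤ)))
  then 1 else 0

/-- Length of the word corresponding to box `j` in `d̃′(η)`. -/
def wordLen' (L M : ℕ) (η : ℕ → ℤ) (j : ℕ) : ℕ :=
  if j ∈ Iset' (L : ℤ) η then L + 2 * M
  else ((L : ℤ) + 2 * M - btilde' L M η j - btilde' L M η (j + 1)).toNat

def wordStart' (L M : ℕ) (η : ℕ → ℤ) (j : ℕ) : ℕ :=
  ∑ k ∈ Finset.range j, wordLen' L M η k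

/-- Primed raised soliton word sequence `d̃′(η)`. -/
def dTilde' (L M : ℕ) (η : ℕ → ℤ) (n : ℕ) : ℤ :=
  if ∃ j, wordStart' L M η j ≤ n ∧ n < wordStart' L M η (j + 1) ∧
      ((j ∈ Iset' (L : ℤ) η ∧
          (L : ℤ) + 2 * M - (η j + M) ≤ ((n - wordStart' L M η j : ℕ) : ℤ)) ∨
        (j ∉ Iset' (L : ℤ) η ∧
          ((n - wordStart' L M η j : ℕ) : ℤ) < η j + M - btilde' L M η j))
  then 1 else 0

/-- The sequence `0^{s 1}1^{t 1}0^{s 2}1^{t 2}⋯0^{s N}1^{t N}0^∞`. -/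
def runSeq (N : ℕ) (s t : ℕ → ℕ) (n : ℕ) : ℤ :=
  if ∃ m, 1 ≤ m ∧ m ≤ N ∧
      (∑ k ∈ Finset.Icc 1 (m - 1), (s k + t k)) + s m ≤ n ∧
      n < ∑ k ∈ Finset.Icc 1 m, (s k + t k)
  then 1 else 0

/-- `w = 0^{s 1}1^{t 1}⋯1^{t N}0^∞` is the (maximal) run decomposition of `w`. -/
def IsRunDecomp (N : ℕ) (s t : ℕ → ℕ) (w : ℕ → ℤ) : Prop :=
  (∀ m, 1 ≤ m → m ≤ N → 1 ≤ t m) ∧ (∀ m, 2 ≤ m → m ≤ N → 1 ≤ s m) ∧ w = runSeq N s t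

def shrinkS (M : ℕ) (s : ℕ → ℕ) (m : ℕ) : ℕ := if m = 1 then s 1 - M else s m - 2 * M

def shrinkT (M : ℕ) (t : ℕ → ℕ) (m : ℕ) : ℕ := t m - 2 * M

/-- `d` is the soliton sequence `d(η)`. -/
def IsSolitonSeq (L M : ℕ) (η : ℕ → ℤ) (d : ℕ → ℤ) : Prop :=
  ∃ N s t, IsRunDecomp N s t (dTilde L M η) ∧ d = runSeq N (shrinkS M s) (shrinkT M t)

/-- `d` is the primed soliton sequence `d′(η)`. -/
def IsSolitonSeq' (L M : ℕ) (η : ℕ → ℤ) (d : ℕ → ℤ) : Prop :=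
  ∃ N s t, IsRunDecomp N s t (dTilde' L M η) ∧ d = runSeq N (shrinkS M s) (shrinkT M t)

/-- Forward shift `Λ`. -/
def lam (c : ℕ → ℤ) : ℕ → ℤ
  | 0 => 0
  | j + 1 => c j

/-- Membership in the background space `S^{(b)}_{L,M}`. -/
def mem_Sb (L M : ℤ) (c : ℕ → ℤ) : Prop := mem_S L M c ∧ ∀ j, c j + c (j + 1) ≤ L

/-- Membership in the soliton space `S^{(f)}_L`: a binary sequence with finitely many
ones all of whose maximal runs of equal letters have length greater than `L`. -/
def mem_Sf (L : ℕ) (w : ℕ → ℤ) : Prop :=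
  (∀ n, w n = 0 ∨ w n = 1) ∧ (∃ N : ℕ, ∀ n, N ≤ n → w n = 0) ∧
  ∀ n m : ℕ, n ≤ m → (∀ j, n ≤ j → j ≤ m → w j = w n) →
    (n = 0 ∨ w (n - 1) ≠ w n) → w (m + 1) ≠ w m → L < m + 1 - n

/-- Stages of the iterative arc-pairing construction: at each stage, connect every pair
`i < j` of yet-unpaired positions with `w i = a`, `w j = b` such that every position
strictly between them is already paired. -/
def arcStage (a b : ℤ) (w : ℕ → ℤ) : ℕ → Set (ℕ × ℕ)
  | 0 => ∅
  | k + 1 => arcStage a b w k ∪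
      {p : ℕ × ℕ | p.1 < p.2 ∧ w p.1 = a ∧ w p.2 = b ∧
        (∀ q ∈ arcStage a b w k, p.1 ≠ q.1 ∧ p.1 ≠ q.2 ∧ p.2 ≠ q.1 ∧ p.2 ≠ q.2) ∧
        (∀ m, p.1 < m → m < p.2 → ∃ q ∈ arcStage a b w k, m = q.1 ∨ m = q.2)}

/-- The arc pairing: `arcPairing 1 0 w` is the 10-arc pairing of `w`, and
`arcPairing 0 1 w` is the 01-arc pairing of `w`. -/
def arcPairing (a b : ℤ) (w : ℕ → ℤ) : Set (ℕ × ℕ) := ⋃ k, arcStage a b w k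

/-- Extension of `η` to integer indices with `η_j = L` for `j < 0`. -/
def etaExt (L : ℕ) (η : ℕ → ℤ) (j : ℤ) : ℤ := if j < 0 then (L : ℤ) else η j.toNat

end

end BBS

namespace BBS

lemma flag01 (L : ℤ) (η : ℕ → ℤ) (j : ℕ) : flag L η j = 0 ∨ flag L η j = 1 := by
  induction j with
  | zero => left; rfl
  | succ j ih => simp only [flag]; split_ifs <;> simp [ih]

lemma flag_one {L : ℤ} {η : ℕ → ℤ} {j : ℕ} (h : flag L η (j + 1) = 1) :
    L ≤ η j + η (j + 1) ∧ (η j + η (j + 1) = L → flag L η j = 1) := by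
  simp only [flag] at h
  split_ifs at h with h1 h2
  · omega
  · exact ⟨by omega, fun _ => h⟩
  · exact ⟨by omega, fun h3 => absurd h3 h2⟩

lemma flag_zero {L : ℤ} {η : ℕ → ℤ} {j : ℕ} (h : flag L η (j + 1) = 0) :
    η j + η (j + 1) ≤ L ∧ (η j + η (j + 1) = L → flag L η j = 0) := by
  simp only [flag] at h
  split_ifs at h with h1 h2
  · exact ⟨by omega, fun _ => by omega⟩
  · exact ⟨by omega, fun _ => h⟩
  · omega

lemma not_I_of_zero {L : ℤ} {η : ℕ → ℤ} {j : ℕ} (h : flag L η j = 0) : j ∉ Iset L η := by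
  rintro ⟨h1, _⟩; omega

lemma not_I_of_succ {L : ℤ} {η : ℕ → ℤ} {j : ℕ} (h : flag L η (j + 1) = 1) : j ∉ Iset L η := by
  rintro ⟨_, h1⟩; omega

lemma I_lt {L : ℤ} {η : ℕ → ℤ} {j : ℕ} (h : j ∈ Iset L η) : η j + η (j + 1) < L := by
  have := flag_zero h.2
  have h1 := h.1
  by_contra hc
  have := this.2 (by omega)
  omega

lemma flag_lt {L : ℤ} {η : ℕ → ℤ} {j : ℕ} (h0 : flag L η j = 0) (h : flag L η (j + 1) = 1) :
    L < η j + η (j + 1) := by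
  have := flag_one h
  by_contra hc
  have := this.2 (by omega)
  omega

lemma flag_ev {L : ℕ} (hL : 1 ≤ L) {η : ℕ → ℤ} {N : ℕ} (h : ∀ j, N ≤ j → η j = 0) (j : ℕ)
    (hj : N + 1 ≤ j) : flag (L : ℤ) η j = 0 := by
  obtain ⟨k, rfl⟩ : ∃ k, j = k + 1 := ⟨j - 1, by omega⟩
  simp only [flag]
  rw [if_pos]
  rw [h k (by omega), h (k + 1) (by omega)]
  omega

lemma bt_marked {L M : ℕ} {η : ℕ → ℤ} {j : ℕ} (h : marked (L : ℤ) η j) : btilde L M η j = 0 := by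
  simp [btilde, h]

lemma bt_unmarked {L M : ℕ} {η : ℕ → ℤ} {j : ℕ} (h : ¬ marked (L : ℤ) η j) :
    btilde L M η j = min (η j + M) ((L : ℤ) + 2 * M - (η (j + 1) + M)) := by
  simp [btilde, h]

lemma bt_bounds {L M : ℕ} {η : ℕ → ℤ} (hb : ∀ j, -(M : ℤ) ≤ η j ∧ η j ≤ L + M) (j : ℕ) :
    0 ≤ btilde L M η j ∧ btilde L M η j ≤ η j + M ∧
      btilde L M η j ≤ (L : ℤ) + 2 * M - (η (j + 1) + M) := by
  have h1 := hb j
  have h2 := hb (j + 1)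
  by_cases h : marked (L : ℤ) η j
  · rw [bt_marked h]; omega
  · rw [bt_unmarked h]; omega

lemma bt_one {L M : ℕ} {η : ℕ → ℤ} {j : ℕ} (h1 : flag (L : ℤ) η (j + 1) = 1)
    (h2 : j + 1 ∉ Iset (L : ℤ) η) :
    btilde L M η j = (L : ℤ) + 2 * M - (η (j + 1) + M) := by
  have : ¬ marked (L : ℤ) η j := by
    rintro (h | h)
    · exact not_I_of_succ h1 h
    · exact h2 h
  rw [bt_unmarked this]
  have := flag_one h1
  omega

lemma bt_zero {L M : ℕ} {η : ℕ → ℤ} {j : ℕ} (h1 : flag (L : ℤ) η (j + 1) = 0)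
    (h2 : j ∉ Iset (L : ℤ) η) :
    btilde L M η j = η j + M := by
  have : ¬ marked (L : ℤ) η j := by
    rintro (h | h)
    · exact h2 h
    · exact not_I_of_zero h1 h
  rw [bt_unmarked this]
  have := flag_zero h1
  omega

/-- Across a block of marked indices starting at `k`, the value at the first unmarked index
does not exceed the value at `k`. -/
lemma skip_le {L : ℕ} {η : ℕ → ℤ} (n : ℕ) : ∀ k, (k ∉ Iset (L : ℤ) η) →
    (∀ i, k ≤ i → i < k + n → marked (L : ℤ) η i) → ¬ marked (L : ℤ) η (k + n) →
    η (k + n) ≤ η k := by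
  induction n using Nat.strong_induction_on with
  | _ n ih =>
    intro k hk hm hn
    rcases n with _ | n
    · simp
    · have h1 : k + 1 ∈ Iset (L : ℤ) η := by
        rcases hm k le_rfl (by omega) with h | h
        · exact absurd h hk
        · exact h
      rcases n with _ | n
      · exact absurd (Or.inl h1) hn
      · have h2 : k + 2 ∉ Iset (L : ℤ) η := not_I_of_zero h1.2
        have h3 := ih n (by omega) (k + 2) h2 (fun i hi hi' => hm i (by omega) (by omega))
          (by rwa [show k + 2 + n = k + (n + 1 + 1) by ring])
        rw [show k + 2 + n = k + (n + 1 + 1) by ring] at h3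
        have h4 := I_lt h1
        have h5 := flag_one h1.1
        have : k + 1 + 1 = k + 2 := rfl
        rw [this] at h4
        omega

lemma skip_le' {L : ℕ} {η : ℕ → ℤ} {k k' : ℕ} (hk : k ∉ Iset (L : ℤ) η) (hkk : k ≤ k')
    (hm : ∀ i, k ≤ i → i < k' → marked (L : ℤ) η i) (hn : ¬ marked (L : ℤ) η k') :
    η k' ≤ η k := by
  obtain ⟨n, rfl⟩ := Nat.exists_eq_add_of_le hkk
  exact skip_le n k hk hm hn

theorem bg_mem (L M : ℕ) (hL : 1 ≤ L) (η : ℕ → ℤ) (hη : mem_S L M η) :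
    mem_Sb L M (bg L M η) := by
  classical
  obtain ⟨⟨N, hN⟩, hb, h0, -, ⟨x, hx⟩, -⟩ := hη
  set p : ℕ → Prop := fun i => ¬ marked (L : ℤ) η i with hp
  have hunm : ∀ j, N + 1 ≤ j → p j := by
    rintro j hj (h | h)
    · exact not_I_of_zero (flag_ev hL hN j hj) h
    · exact not_I_of_zero (flag_ev hL hN (j + 1) (by omega)) h
  have hinf : (Set.ofPred p).Infinite := by
    apply Set.infinite_of_not_bddAbove
    rintro ⟨B, hB⟩
    have := hB (show B + N + 1 ∈ Set.ofPred p from hunm _ (by omega))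
    omega
  have hnp : ∀ j, p (Nat.nth p j) := fun j => Nat.nth_mem_of_infinite hinf j
  have hbg : ∀ j, bg L M η j = btilde L M η (Nat.nth p j) - M := fun j => rfl
  have hbd := bt_bounds hb
  have hbound : ∀ j, -(M : ℤ) ≤ bg L M η j ∧ bg L M η j ≤ L + M := by
    intro j
    rw [hbg]
    have h1 := hbd (Nat.nth p j)
    have h2 := hb (Nat.nth p j)
    omega
  have hbetween : ∀ j i, Nat.nth p j < i → i < Nat.nth p (j + 1) → marked (L : ℤ) η i := by
    intro j i h1 h2
    by_contra hc
    have h3 : p i := hc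
    have h4 := Nat.nth_count h3
    rw [← h4] at h1 h2
    have h5 := (Nat.nth_lt_nth hinf).1 h1
    have h6 := (Nat.nth_lt_nth hinf).1 h2
    omega
  have hpair : ∀ j, bg L M η j + bg L M η (j + 1) ≤ L := by
    intro j
    rw [hbg, hbg]
    have h1 := hbd (Nat.nth p j)
    have h2 := hbd (Nat.nth p (j + 1))
    have hlt : Nat.nth p j < Nat.nth p (j + 1) := (Nat.nth_lt_nth hinf).2 (by omega)
    have hI : Nat.nth p j + 1 ∉ Iset (L : ℤ) η := fun h => hnp j (Or.inr h)
    have h3 := skip_le' hI hlt (fun i hi hi' => hbetween j i (by omega) hi') (hnp (j + 1))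
    omega
  have hfirst : bg L M η 0 ≤ 0 := by
    rw [hbg]
    have hI : 0 ∉ Iset (L : ℤ) η := not_I_of_zero rfl
    have h3 := skip_le' (k' := Nat.nth p 0) hI (by omega) (fun i _ hi' => by
      by_contra hc
      have h4 := Nat.nth_count (p := p) hc
      rw [← h4] at hi'
      have h6 := (Nat.nth_lt_nth hinf).1 hi'
      omega) (hnp 0)
    have h1 := hbd (Nat.nth p 0)
    omega
  refine ⟨⟨⟨N + 1, ?_⟩, hbound, hfirst, ?_, ?_, ?_⟩, hpair⟩
  · intro j hj
    have h1 : j ≤ Nat.nth p j := (Nat.nth_strictMono hinf).le_apply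
    rw [hbg, bt_unmarked (hnp j), hN _ (by omega), hN _ (by omega)]
    omega
  · intro j
    have := hbound j
    omega
  · have key : ∃ k, p k ∧ btilde L M η k = 0 := by
      rcases le_total (η x - L) (-η x) with hle | hle
      · have hx0 : η x = -M := by omega
        by_cases hmx : p x
        · refine ⟨x, hmx, ?_⟩
          rw [bt_unmarked hmx]
          have := hb (x + 1)
          omega
        · -- x marked
          have hone : flag (L : ℤ) η x = 1 := by
            rcases not_not.1 hmx with h | h
            · exact h.1
            · have h1 := flag_one h.1
              have := hb (x + 1)
              exact h1.2 (by omega)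
          obtain ⟨y, rfl⟩ : ∃ y, x = y + 1 := by
            rcases x with _ | y
            · exact absurd hone (by simp [flag])
            · exact ⟨y, rfl⟩
          have h1 := flag_one hone
          have hby := hb y
          have hfy := h1.2 (by omega)
          obtain ⟨z, rfl⟩ : ∃ z, y = z + 1 := by
            rcases y with _ | z
            · exact absurd hfy (by simp [flag])
            · exact ⟨z, rfl⟩
          have hmz : p z := by
            rintro (h | h)
            · exact not_I_of_succ hfy h
            · exact not_I_of_succ hone h
          refine ⟨z, hmz, ?_⟩
          rw [bt_unmarked hmz]
          have := hb z
          omega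
      · have hx0 : η x = L + M := by omega
        obtain ⟨y, rfl⟩ : ∃ y, x = y + 1 := by
          rcases x with _ | y
          · omega
          · exact ⟨y, rfl⟩
        have hmy : p y := by
          rintro (h | h)
          · have := I_lt h
            have := hb y
            omega
          · have := I_lt h
            have := hb (y + 1 + 1)
            omega
        refine ⟨y, hmy, ?_⟩
        rw [bt_unmarked hmy]
        have := hb y
        omega
    obtain ⟨k, hk, hk0⟩ := key
    refine ⟨Nat.count p k, ?_⟩
    rw [hbg, Nat.nth_count hk, hk0]
    omega
  · intro i
    induction i with
    | zero =>
      have := hpair 0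
      simp [Finset.sum_range_succ] at *
      omega
    | succ i ih =>
      rw [Finset.sum_range_succ (bg L M η), Finset.sum_range_succ (fun j => (L : ℤ) - bg L M η j)]
      have := hpair (i + 1)
      have e : i + 1 + 1 = i + 2 := rfl
      rw [e] at this ⊢
      omega

lemma bprev_bounds {L M : ℕ} {η : ℕ → ℤ} (hb : ∀ j, -(M : ℤ) ≤ η j ∧ η j ≤ L + M) (j : ℕ) :
    0 ≤ bprev L M η j ∧ bprev L M η j ≤ (L : ℤ) + 2 * M - (η j + M) := by
  rcases j with _ | j
  · have := hb 0
    simp only [bprev]; omega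
  · have := bt_bounds hb j
    simp only [bprev]; omega

lemma ws_I {L M : ℕ} {η : ℕ → ℤ} {j : ℕ} (h : j ∈ Iset (L : ℤ) η) :
    wordStart L M η (j + 1) = wordStart L M η j + (L + 2 * M) := by
  simp [wordStart, Finset.sum_range_succ, wordLen, h]

lemma ws_N {L M : ℕ} {η : ℕ → ℤ} (hb : ∀ j, -(M : ℤ) ≤ η j ∧ η j ≤ L + M) {j : ℕ}
    (h : j ∉ Iset (L : ℤ) η) :
    (wordStart L M η (j + 1) : ℤ) =
      wordStart L M η j + ((L : ℤ) + 2 * M - bprev L M η j - btilde L M η j) := by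
  have h1 := bprev_bounds hb j
  have h2 := bt_bounds hb j
  simp only [wordStart, Finset.sum_range_succ, wordLen, h, if_false]
  push_cast
  rw [Int.toNat_of_nonneg (by omega)]

lemma ws_mono (L M : ℕ) (η : ℕ → ℤ) : Monotone (wordStart L M η) :=
  monotone_nat_of_le_succ fun j => by simp [wordStart, Finset.sum_range_succ]

lemma box_unique {L M : ℕ} {η : ℕ → ℤ} {i j n : ℕ} (h1 : wordStart L M η i ≤ n)
    (h2 : n < wordStart L M η (i + 1)) (h3 : wordStart L M η j ≤ n)
    (h4 : n < wordStart L M η (j + 1)) : i = j := by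
  rcases lt_trichotomy i j with h | h | h
  · have := ws_mono L M η (show i + 1 ≤ j from h); omega
  · exact h
  · have := ws_mono L M η (show j + 1 ≤ i from h); omega

lemma d01 (L M : ℕ) (η : ℕ → ℤ) (n : ℕ) : dTilde L M η n = 0 ∨ dTilde L M η n = 1 := by
  unfold dTilde; split_ifs <;> simp

lemma one_I {L M : ℕ} {η : ℕ → ℤ} (hb : ∀ j, -(M : ℤ) ≤ η j ∧ η j ≤ L + M) {j n : ℕ}
    (h : j ∈ Iset (L : ℤ) η) (h1 : wordStart L M η j ≤ n)
    (h2 : (n : ℤ) < wordStart L M η j + (η j + M)) : dTilde L M η n = 1 := by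
  unfold dTilde
  rw [if_pos]
  have := hb j
  have := ws_I (M := M) h
  exact ⟨j, h1, by omega, Or.inl ⟨h, by omega⟩⟩

lemma one_N {L M : ℕ} {η : ℕ → ℤ} (hb : ∀ j, -(M : ℤ) ≤ η j ∧ η j ≤ L + M) {j n : ℕ}
    (h : j ∉ Iset (L : ℤ) η)
    (h1 : wordStart L M η j + ((L : ℤ) + 2 * M - (η j + M) - bprev L M η j) ≤ n)
    (h2 : n < wordStart L M η (j + 1)) : dTilde L M η n = 1 := by
  unfold dTilde
  rw [if_pos]
  have := bprev_bounds hb j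
  exact ⟨j, by omega, by omega, Or.inr ⟨h, by omega⟩⟩

lemma zero_I {L M : ℕ} {η : ℕ → ℤ} (hb : ∀ j, -(M : ℤ) ≤ η j ∧ η j ≤ L + M) {j n : ℕ}
    (h : j ∈ Iset (L : ℤ) η) (h1 : (wordStart L M η j : ℤ) + (η j + M) ≤ n)
    (h2 : n < wordStart L M η (j + 1)) : dTilde L M η n = 0 := by
  unfold dTilde
  rw [if_neg]
  rintro ⟨i, h3, h4, h5⟩
  have := hb j
  have := box_unique h3 h4 (by omega) h2
  subst this
  rcases h5 with ⟨_, h5⟩ | ⟨h5, _⟩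
  · omega
  · exact h5 h

lemma zero_N {L M : ℕ} {η : ℕ → ℤ} (hb : ∀ j, -(M : ℤ) ≤ η j ∧ η j ≤ L + M) {j n : ℕ}
    (h : j ∉ Iset (L : ℤ) η) (h1 : wordStart L M η j ≤ n)
    (h2 : (n : ℤ) < wordStart L M η j + ((L : ℤ) + 2 * M - (η j + M) - bprev L M η j)) :
    dTilde L M η n = 0 := by
  unfold dTilde
  rw [if_neg]
  rintro ⟨i, h3, h4, h5⟩
  have h6 := ws_N hb h
  have := bt_bounds hb j
  have := box_unique h3 h4 h1 (by omega)
  subst this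
  rcases h5 with ⟨h5, _⟩ | ⟨_, h5⟩
  · exact h h5
  · omega

lemma one_inv {L M : ℕ} {η : ℕ → ℤ} {n : ℕ} (hn : dTilde L M η n = 1) :
    ∃ j, wordStart L M η j ≤ n ∧ n < wordStart L M η (j + 1) ∧
      ((j ∈ Iset (L : ℤ) η ∧ (n : ℤ) < wordStart L M η j + (η j + M)) ∨
       (j ∉ Iset (L : ℤ) η ∧
        wordStart L M η j + ((L : ℤ) + 2 * M - (η j + M) - bprev L M η j) ≤ n)) := by
  unfold dTilde at hn
  split_ifs at hn with h
  swap
  · omega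
  obtain ⟨j, h1, h2, h3⟩ := h
  refine ⟨j, h1, h2, ?_⟩
  rcases h3 with h3 | h3
  · exact Or.inl ⟨h3.1, by omega⟩
  · exact Or.inr ⟨h3.1, by omega⟩

/-- Zeros after the end of a soliton. -/
lemma zeros_after {L M : ℕ} {η : ℕ → ℤ} (hb : ∀ j, -(M : ℤ) ≤ η j ∧ η j ≤ L + M) {q n : ℕ}
    (h : q ∈ Iset (L : ℤ) η) (h1 : (wordStart L M η q : ℤ) + (η q + M) ≤ n)
    (h2 : (n : ℤ) ≤ (wordStart L M η q : ℤ) + (η q + M) + (L + 2 * M)) :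
    dTilde L M η n = 0 := by
  by_cases hc : n < wordStart L M η (q + 1)
  · exact zero_I hb h h1 hc
  · have h3 := ws_I (M := M) h
    have h4 : bprev L M η (q + 1) = 0 := bt_marked (Or.inl h)
    have h5 := I_lt h
    apply zero_N hb (not_I_of_zero h.2) (by omega)
    rw [h4]
    omega

/-- Ones from a flagged box to the end of its soliton. -/
lemma ones_to {L M : ℕ} (hL : 1 ≤ L) {η : ℕ → ℤ} (hb : ∀ j, -(M : ℤ) ≤ η j ∧ η j ≤ L + M)
    {N : ℕ} (hN : ∀ j, N ≤ j → η j = 0) (k : ℕ) : ∀ j, N + 1 ≤ j + k → flag (L : ℤ) η j = 1 →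
    ∃ q, q ∈ Iset (L : ℤ) η ∧ j ≤ q ∧
      (∀ n : ℕ, wordStart L M η j ≤ n → (n : ℤ) < wordStart L M η q + (η q + M) →
        dTilde L M η n = 1) ∧
      η j + M + bprev L M η j ≤ wordStart L M η q + (η q + M) - wordStart L M η j := by
  induction k with
  | zero =>
    intro j hj hf
    have := flag_ev hL hN j hj
    omega
  | succ k ih =>
    intro j hj hf
    obtain ⟨i, rfl⟩ : ∃ i, j = i + 1 := by
      rcases j with _ | i
      · exact absurd hf (by simp [flag])
      · exact ⟨i, rfl⟩
    by_cases hI : i + 1 ∈ Iset (L : ℤ) η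
    · refine ⟨i + 1, hI, le_rfl, fun n h1 h2 => one_I hb hI h1 h2, ?_⟩
      have : bprev L M η (i + 1) = 0 := bt_marked (Or.inr hI)
      omega
    · have hf2 : flag (L : ℤ) η (i + 1 + 1) = 1 := by
        rcases flag01 L η (i + 1 + 1) with h | h
        · exact absurd ⟨hf, h⟩ hI
        · exact h
      obtain ⟨q, hq, hjq, hones, hlen⟩ := ih (i + 1 + 1) (by omega) hf2
      have e1 : bprev L M η (i + 1) = (L : ℤ) + 2 * M - (η (i + 1) + M) := bt_one hf hI
      have e2 : bprev L M η (i + 1 + 1) = btilde L M η (i + 1) := rfl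
      have e3 := ws_N hb hI
      have e4 := flag_one hf2
      refine ⟨q, hq, by omega, ?_, ?_⟩
      · intro n h1 h2
        by_cases hc : n < wordStart L M η (i + 1 + 1)
        · exact one_N hb hI (by omega) hc
        · exact hones n (by omega) h2
      · omega

lemma one_before {L M : ℕ} {η : ℕ → ℤ} (hb : ∀ j, -(M : ℤ) ≤ η j ∧ η j ≤ L + M) (j : ℕ)
    (hf : flag (L : ℤ) η j = 1) :
    1 ≤ wordStart L M η j ∧ dTilde L M η (wordStart L M η j - 1) = 1 := by
  induction j with
  | zero => exact absurd hf (by simp [flag])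
  | succ j ih =>
    have hI := not_I_of_succ hf
    have e3 := ws_N (M := M) hb hI
    have hbp := bprev_bounds hb j
    have hbt := bt_bounds hb j
    rcases flag01 L η j with h | h
    · have h1 := flag_lt h hf
      have hlt : btilde L M η j < η j + M := by
        by_cases hI2 : j + 1 ∈ Iset (L : ℤ) η
        · rw [bt_marked (Or.inr hI2)]
          have := hb (j + 1)
          omega
        · rw [bt_one hf hI2]
          omega
      refine ⟨by omega, one_N hb hI (by omega) (by omega)⟩
    · by_cases hc : wordStart L M η (j + 1) = wordStart L M η j
      · rw [hc]; exact ih h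
      · obtain ⟨i, rfl⟩ : ∃ i, j = i + 1 := by
          rcases j with _ | i
          · exact absurd h (by simp [flag])
          · exact ⟨i, rfl⟩
        have e1 : bprev L M η (i + 1) = (L : ℤ) + 2 * M - (η (i + 1) + M) := bt_one h hI
        refine ⟨by omega, one_N hb hI (by omega) (by omega)⟩

/-- A box without its own flag which contains ones is followed by a flagged box. -/
lemma flag_next {L M : ℕ} {η : ℕ → ℤ} (hb : ∀ j, -(M : ℤ) ≤ η j ∧ η j ≤ L + M) {j n : ℕ}
    (hI : j ∉ Iset (L : ℤ) η) (h1 : n < wordStart L M η (j + 1))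
    (h2 : wordStart L M η j + ((L : ℤ) + 2 * M - (η j + M) - bprev L M η j) ≤ n) :
    flag (L : ℤ) η (j + 1) = 1 := by
  rcases flag01 L η (j + 1) with h | h
  · have := bt_zero (M := M) h hI
    have := ws_N hb hI
    omega
  · exact h

theorem d_A {L M : ℕ} (hL : 1 ≤ L) {η : ℕ → ℤ} (hη : mem_S L M η) (n : ℕ)
    (hn : dTilde L M η n = 1) (hn' : n = 0 ∨ dTilde L M η (n - 1) = 0) (i : ℕ)
    (hi : i ≤ L + 2 * M) : dTilde L M η (n + i) = 1 := by
  obtain ⟨⟨N, hN⟩, hb, -⟩ := hη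
  obtain ⟨j, h1, h2, h3⟩ := one_inv hn
  rcases flag01 L η j with hf | hf
  · have hI := not_I_of_zero hf
    have h3 : wordStart L M η j + ((L : ℤ) + 2 * M - (η j + M) - bprev L M η j) ≤ n := by
      rcases h3 with h3 | h3
      · exact absurd h3.1 hI
      · exact h3.2
    have hf1 := flag_next hb hI h2 h3
    have hbp := bprev_bounds hb j
    have heq : wordStart L M η j + ((L : ℤ) + 2 * M - (η j + M) - bprev L M η j) = n := by
      by_contra hc
      have := one_N hb (n := n - 1) hI (by omega) (by omega)
      rcases hn' with h | h <;> omega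
    obtain ⟨q, hq, hjq, hones, hlen⟩ := ones_to hL hb hN (N + 1) (j + 1) (by omega) hf1
    have h4 := flag_lt hf hf1
    have e2 : bprev L M η (j + 1) = btilde L M η j := rfl
    have e3 := ws_N (M := M) hb hI
    by_cases hc : n + i < wordStart L M η (j + 1)
    · exact one_N hb hI (by push_cast; omega) hc
    · exact hones _ (by omega) (by push_cast; omega)
  · exfalso
    obtain ⟨q, hq, hjq, hones, hlen⟩ := ones_to hL hb hN (N + 1) j (by omega) hf
    have h4 := one_before hb j hf
    have hprev : dTilde L M η (n - 1) = 1 := by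
      by_cases hc : n = wordStart L M η j
      · rw [hc]; exact h4.2
      · rcases h3 with ⟨h3, h5⟩ | ⟨h3, h5⟩
        · exact one_I hb h3 (by omega) (by omega)
        · obtain ⟨i, rfl⟩ : ∃ i, j = i + 1 := by
            rcases j with _ | i
            · exact absurd hf (by simp [flag])
            · exact ⟨i, rfl⟩
          have e1 : bprev L M η (i + 1) = (L : ℤ) + 2 * M - (η (i + 1) + M) := bt_one hf h3
          exact one_N hb h3 (by omega) (by omega)
    rcases hn' with h | h <;> omega

theorem d_B {L M : ℕ} (hL : 1 ≤ L) {η : ℕ → ℤ} (hη : mem_S L M η) (n : ℕ)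
    (hn : dTilde L M η (n + 1) = 0) (hn' : dTilde L M η n = 1) (i : ℕ)
    (hi : i ≤ L + 2 * M) : dTilde L M η (n + 1 + i) = 0 := by
  obtain ⟨⟨N, hN⟩, hb, -⟩ := hη
  obtain ⟨j, h1, h2, h3⟩ := one_inv hn'
  rcases h3 with ⟨hI, h3⟩ | ⟨hI, h3⟩
  · have : ¬ ((n + 1 : ℕ) : ℤ) < wordStart L M η j + (η j + M) := by
      intro hc
      have := one_I hb hI (n := n + 1) (by omega) hc
      omega
    exact zeros_after hb hI (by push_cast at *; omega) (by push_cast at *; omega)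
  · have hf1 := flag_next hb hI h2 h3
    obtain ⟨q, hq, hjq, hones, hlen⟩ := ones_to hL hb hN (N + 1) (j + 1) (by omega) hf1
    have h4 : n + 1 = wordStart L M η (j + 1) := by
      by_contra hc
      have := one_N hb hI (n := n + 1) (by push_cast; omega) (by omega)
      omega
    have h5 : ¬ ((n + 1 : ℕ) : ℤ) < wordStart L M η q + (η q + M) := by
      intro hc
      have := hones (n + 1) (by omega) hc
      omega
    have h6 := ws_mono L M η hjq
    have := hb q
    exact zeros_after hb hq (by push_cast at *; omega) (by push_cast at *; omega)

lemma Z_eq {L M : ℕ} {η : ℕ → ℤ} (hb : ∀ j, -(M : ℤ) ≤ η j ∧ η j ≤ L + M) (k : ℕ)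
    (hk : ∀ i ≤ k, flag (L : ℤ) η i = 0) :
    wordStart L M η k + ((L : ℤ) + 2 * M - (η k + M) - bprev L M η k) =
      L + M + ∑ j ∈ Finset.range k, (L - η j) - ∑ j ∈ Finset.range (k + 1), η j := by
  induction k with
  | zero => simp [wordStart, bprev]; ring
  | succ k ih =>
    have h1 := ih (fun i hi => hk i (by omega))
    have hI := not_I_of_zero (hk k (by omega))
    have h2 := ws_N (M := M) hb hI
    have h3 := bt_zero (M := M) (hk (k + 1) le_rfl) hI
    have e2 : bprev L M η (k + 1) = btilde L M η k := rfl
    rw [Finset.sum_range_succ η, Finset.sum_range_succ (fun j => (L : ℤ) - η j), e2]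
    omega

theorem d_C {L M : ℕ} {η : ℕ → ℤ} (hη : mem_S L M η) (n : ℕ)
    (hn : n ≤ L + M) : dTilde L M η n = 0 := by
  classical
  obtain ⟨-, hb, -, -, -, hs⟩ := hη
  rcases d01 L M η n with h | h
  · exact h
  exfalso
  obtain ⟨j, h1, h2, h3⟩ := one_inv h
  have hex : ∃ p, flag (L : ℤ) η p = 1 := by
    rcases h3 with ⟨hI, h3⟩ | ⟨hI, h3⟩
    · exact ⟨j, hI.1⟩
    · exact ⟨j + 1, flag_next hb hI h2 h3⟩
  have hp := Nat.find_spec hex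
  have hmin : ∀ i, i < Nat.find hex → flag (L : ℤ) η i = 0 := fun i hi => by
    rcases flag01 L η i with h | h
    · exact h
    · exact absurd h (Nat.find_min hex hi)
  generalize Nat.find hex = p at hp hmin
  obtain ⟨k, rfl⟩ : ∃ k, p = k + 1 := by
    rcases p with _ | i
    · exact absurd hp (by simp [flag])
    · exact ⟨i, rfl⟩
  have hZ := Z_eq (M := M) hb k (fun i hi => hmin i (by omega))
  have hkI := not_I_of_zero (hmin k (by omega))
  have hlt := flag_lt (hmin k (by omega)) hp
  have hsk := hs k
  rw [Finset.sum_range_succ η, Finset.sum_range_succ (fun j => (L : ℤ) - η j)] at hsk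
  have hge : wordStart L M η k + ((L : ℤ) + 2 * M - (η k + M) - bprev L M η k) ≤ n := by
    rcases lt_trichotomy j k with hjk | hjk | hjk
    · exfalso
      have hjI := not_I_of_zero (hmin j (by omega))
      rcases h3 with ⟨hI, h3⟩ | ⟨hI, h3⟩
      · exact hjI hI
      · have := flag_next hb hI h2 h3
        have := hmin (j + 1) (by omega)
        omega
    · subst hjk
      rcases h3 with ⟨hI, h3⟩ | ⟨hI, h3⟩
      · exact absurd hI hkI
      · exact h3
    · have := ws_mono L M η (show k + 1 ≤ j from hjk)
      have := ws_N (M := M) hb hkI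
      have := bt_bounds hb k
      omega
  omega

/-- Partial sums of run lengths. -/
def runP (s t : ℕ → ℕ) (m : ℕ) : ℕ := ∑ k ∈ Finset.Icc 1 m, (s k + t k)

lemma runP_succ (s t : ℕ → ℕ) (m : ℕ) : runP s t (m + 1) = runP s t m + (s (m + 1) + t (m + 1)) := by
  simp [runP, Finset.sum_Icc_succ_top]

lemma runP_mono (s t : ℕ → ℕ) : Monotone (runP s t) :=
  monotone_nat_of_le_succ fun m => by rw [runP_succ]; omega

lemma run01 (N : ℕ) (s t : ℕ → ℕ) (n : ℕ) : runSeq N s t n = 0 ∨ runSeq N s t n = 1 := by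
  unfold runSeq; split_ifs <;> simp

lemma run_one {N : ℕ} {s t : ℕ → ℕ} {n m : ℕ} (hm : m < N) (h1 : runP s t m + s (m + 1) ≤ n)
    (h2 : n < runP s t (m + 1)) : runSeq N s t n = 1 := by
  unfold runSeq
  rw [if_pos]
  exact ⟨m + 1, by omega, by omega, h1, h2⟩

lemma run_inv {N : ℕ} {s t : ℕ → ℕ} {n : ℕ} (h : runSeq N s t n = 1) :
    ∃ m, m < N ∧ runP s t m + s (m + 1) ≤ n ∧ n < runP s t (m + 1) := by
  unfold runSeq at h
  split_ifs at h with hc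
  swap
  · omega
  obtain ⟨m, h1, h2, h3, h4⟩ := hc
  obtain ⟨k, rfl⟩ : ∃ k, m = k + 1 := ⟨m - 1, by omega⟩
  exact ⟨k, by omega, h3, h4⟩

lemma run_zero {N : ℕ} {s t : ℕ → ℕ} {n m : ℕ} (h1 : runP s t m ≤ n)
    (h2 : m < N → n < runP s t m + s (m + 1)) (hm : m ≤ N) : runSeq N s t n = 0 := by
  rcases run01 N s t n with h | h
  · exact h
  exfalso
  obtain ⟨k, hk, h3, h4⟩ := run_inv h
  rcases lt_trichotomy k m with h | h | h
  · have := runP_mono s t (show k + 1 ≤ m from h); omega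
  · subst h; have := h2 hk; omega
  · have := runP_mono s t (show m + 1 ≤ k from h)
    rw [runP_succ] at this
    have := h2 (by omega); omega

theorem run_mem {L N : ℕ} {s t : ℕ → ℕ} (hs : ∀ m, m < N → L < s (m + 1))
    (ht : ∀ m, m < N → L < t (m + 1)) : mem_Sf L (runSeq N s t) := by
  refine ⟨run01 N s t, ⟨runP s t N, fun n hn => run_zero hn (fun h => by omega) le_rfl⟩, ?_⟩
  intro n m hnm hc hl hr
  rcases run01 N s t n with h | h
  · have hm : runSeq N s t m = 0 := by rw [hc m hnm le_rfl, h]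
    have hm1 : runSeq N s t (m + 1) = 1 := by
      rcases run01 N s t (m + 1) with h' | h'
      · omega
      · exact h'
    obtain ⟨k, hk, h3, h4⟩ := run_inv hm1
    have hsk := hs k hk
    have e : runP s t k + s (k + 1) = m + 1 := by
      by_contra hne
      have := run_one (s := s) (t := t) hk (n := m) (by omega) (by omega)
      omega
    have : n ≤ runP s t k := by
      by_contra hne
      have := run_zero (N := N) (s := s) (t := t) (n := n - 1) (m := k) (by omega)
        (fun _ => by omega) hk.le
      rcases hl with hl | hl <;> omega
    omega
  · have hm : runSeq N s t m = 1 := by rw [hc m hnm le_rfl, h]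
    obtain ⟨k, hk, h3, h4⟩ := run_inv h
    have htk := ht k hk
    have e : runP s t k + s (k + 1) = n := by
      by_contra hne
      have := run_one (s := s) (t := t) hk (n := n - 1) (by omega) (by omega)
      rcases hl with hl | hl <;> omega
    have : runP s t (k + 1) ≤ m + 1 := by
      by_contra hne
      have := run_one (s := s) (t := t) hk (n := m + 1) (by omega) (by omega)
      omega
    rw [runP_succ] at this
    omega

theorem d_mem (L M : ℕ) (hL : 1 ≤ L) (η : ℕ → ℤ) (hη : mem_S L M η) (d : ℕ → ℤ)
    (hd : IsSolitonSeq L M η d) : mem_Sf L d := by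
  obtain ⟨N, s, t, ⟨ht, hs, hw⟩, rfl⟩ := hd
  have hA := d_A hL hη
  have hB := d_B hL hη
  have hC := fun n => d_C hη n
  rw [hw] at hA hB hC
  have hone : ∀ m, m < N → runSeq N s t (runP s t m + s (m + 1)) = 1 := fun m hm =>
    run_one hm le_rfl (by
      have := ht (m + 1) (by omega) (by omega)
      rw [runP_succ]; omega)
  have hend : ∀ m, m < N → runSeq N s t (runP s t (m + 1)) = 0 := fun m hm =>
    run_zero le_rfl (fun h => by
      have := hs (m + 1 + 1) (by omega) (by omega)
      omega) hm
  have hlast : ∀ m, m < N → runSeq N s t (runP s t (m + 1) - 1) = 1 := fun m hm => by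
    have := ht (m + 1) (by omega) (by omega)
    have e := runP_succ s t m
    exact run_one hm (by omega) (by omega)
  have hT : ∀ m, m < N → L + 2 * M < t (m + 1) := by
    intro m hm
    by_contra hc
    have h1 := hA _ (hone m hm) (by
      by_cases h0 : runP s t m + s (m + 1) = 0
      · exact Or.inl h0
      · right
        have hsm : 1 ≤ s (m + 1) := by
          rcases m with _ | m
          · simp [runP] at h0 ⊢; omega
          · exact hs _ (by omega) (by omega)
        exact run_zero (m := m) (by omega) (fun _ => by omega) hm.le) (t (m + 1)) (by omega)
    have h2 := hend m hm
    rw [runP_succ, ← add_assoc] at h2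
    omega
  have hS : ∀ m, m + 1 < N → L + 2 * M < s (m + 1 + 1) := by
    intro m hm
    by_contra hc
    have ht1 := ht (m + 1) (by omega) (by omega)
    have e := runP_succ s t m
    have e2 : runP s t (m + 1) - 1 + 1 = runP s t (m + 1) := by omega
    have h1 := hB (runP s t (m + 1) - 1) (by rw [e2]; exact hend m (by omega))
      (hlast m (by omega)) (s (m + 1 + 1)) (by omega)
    rw [e2] at h1
    have h2 := hone (m + 1) hm
    omega
  have hS1 : 0 < N → L + M < s 1 := by
    intro hm
    by_contra hc
    have h1 := hone 0 hm
    have h2 := hC (s 1) (by omega)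
    simp [runP] at h1
    omega
  apply run_mem
  · intro m hm
    rcases m with _ | m
    · have := hS1 hm
      simp [shrinkS]; omega
    · have := hS m hm
      simp [shrinkS]; omega
  · intro m hm
    have := hT m hm
    simp [shrinkT]; omega

end BBS

open BBS

/-- the decomposition map lands in the product of the background space
and the soliton space: `c(η) ∈ S^{(b)}_{L,M}` and `d(η) ∈ S^{(f)}_L`. -/
theorem stmt_14 (L M : ℕ) (hL : 1 ≤ L) (η : ℕ → ℤ) (hη : mem_S L M η) :
    mem_Sb L M (bg L M η) ∧
    (∀ d : ℕ → ℤ, IsSolitonSeq L M η d → mem_Sf L d) := by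
  exact ⟨bg_mem L M hL η hη, fun d hd => d_mem L M hL η hη d hd⟩
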